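/- Let n ≥ 1 and k ≥ 1 be integers, let t > 0, and let V₁, …, V_k ∈ L^∞(ℝⁿ) ∩ L^k(ℝⁿ) have compact support. Then |T_k(t; V₁,…,V_k)| ≤ (4πt)^{−n/2} (t^k / k!) ∏_{j=1}^k ‖V_j‖_{L^k(ℝⁿ)}. -/

import Mathlib

open MeasureTheory Real Filter Topology

/-- The free heat kernel `p_u(x,y) = (4πu)^{-n/2} e^{-|x-y|²/(4u)}` on `ℝⁿ`. -/
noncomputable def heatKernel (n : ℕ) (u : ℝ) (x y : EuclideanSpace ℝ (Fin n)) : ℝ :=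
  (4 * Real.pi * u) ^ (-(n : ℝ) / 2) * Real.exp (-‖x - y‖ ^ 2 / (4 * u))

/-- The multilinear Duhamel trace term `T_k(t; V₁,…,V_k)`. -/
noncomputable def traceTermMulti (n k : ℕ)
    (V : Fin k → (EuclideanSpace ℝ (Fin n) → ℝ)) (t : ℝ) : ℝ :=
  ∫ s in {s : Fin k → ℝ | StrictMono s ∧ ∀ i, 0 < s i ∧ s i < t},
    ∫ x : EuclideanSpace ℝ (Fin n),
      ∫ y : Fin k → EuclideanSpace ℝ (Fin n),
        (∏ i : Fin (k + 1),
            heatKernel n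
              ((Fin.cons 0 (Fin.snoc s t) : Fin (k + 2) → ℝ) i.succ -
                (Fin.cons 0 (Fin.snoc s t) : Fin (k + 2) → ℝ) i.castSucc)
              ((Fin.cons x (Fin.snoc y x) : Fin (k + 2) → EuclideanSpace ℝ (Fin n)) i.castSucc)
              ((Fin.cons x (Fin.snoc y x) : Fin (k + 2) → EuclideanSpace ℝ (Fin n)) i.succ)) *
          ∏ i : Fin k, V i (y i)

open scoped ENNReal

lemma aux_gauss (n : ℕ) {b : ℝ} (hb : 0 < b) (m : EuclideanSpace ℝ (Fin n)) :
    ∫⁻ a : EuclideanSpace ℝ (Fin n), ENNReal.ofReal (Real.exp (-b * ‖a - m‖ ^ 2)) =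
      ENNReal.ofReal ((π / b) ^ ((n : ℝ) / 2)) := by
  rw [lintegral_sub_right_eq_self
    (fun a : EuclideanSpace ℝ (Fin n) => ENNReal.ofReal (Real.exp (-b * ‖a‖ ^ 2))) m]
  have h := GaussianFourier.integral_rexp_neg_mul_sq_norm (V := EuclideanSpace ℝ (Fin n)) hb
  rw [finrank_euclideanSpace, Fintype.card_fin] at h
  have hpos : 0 < (π / b) ^ ((n : ℝ) / 2) := by positivity
  rw [← h, ofReal_integral_eq_lintegral_ofReal]
  · by_contra hc
    rw [integral_undef hc] at h
    linarith
  · exact Eventually.of_forall fun x => (Real.exp_pos _).le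

lemma aux_square (n : ℕ) {u v : ℝ} (hu : 0 < u) (hv : 0 < v)
    (x y a : EuclideanSpace ℝ (Fin n)) :
    -‖x - a‖ ^ 2 / (4 * u) + -‖a - y‖ ^ 2 / (4 * v) =
      -((u + v) / (4 * u * v)) * ‖a - ((v / (u + v)) • x + (u / (u + v)) • y)‖ ^ 2
        + -‖x - y‖ ^ 2 / (4 * (u + v)) := by
  have huv : u + v ≠ 0 := by positivity
  have e1 : a - ((v / (u + v)) • x + (u / (u + v)) • y)
      = (u / (u + v)) • (a - y) - (v / (u + v)) • (x - a) := by
    have : a = (u / (u + v)) • a + (v / (u + v)) • a := by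
      rw [← add_smul, ← add_div, div_self huv, one_smul]
    nth_rewrite 1 [this]
    simp only [smul_sub]
    abel
  have e2 : x - y = (x - a) + (a - y) := by abel
  rw [e1, e2]
  generalize x - a = p
  generalize a - y = q
  rw [@norm_sub_sq_real, @norm_add_sq_real, norm_smul, norm_smul, inner_smul_left,
    inner_smul_right, mul_pow, mul_pow, Real.norm_eq_abs, Real.norm_eq_abs, sq_abs, sq_abs,
    real_inner_comm]
  simp only [conj_trivial]
  field_simp
  ring

lemma aux_heat_nonneg (n : ℕ) {u : ℝ} (hu : 0 < u) (x y : EuclideanSpace ℝ (Fin n)) :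
    0 ≤ heatKernel n u x y := by
  unfold heatKernel; positivity

lemma aux_CK (n : ℕ) {u v : ℝ} (hu : 0 < u) (hv : 0 < v)
    (x y : EuclideanSpace ℝ (Fin n)) :
    ∫⁻ a, ENNReal.ofReal (heatKernel n u x a) * ENNReal.ofReal (heatKernel n v a y) =
      ENNReal.ofReal (heatKernel n (u + v) x y) := by
  have hb : 0 < (u + v) / (4 * u * v) := by positivity
  have key : ∀ a, ENNReal.ofReal (heatKernel n u x a) * ENNReal.ofReal (heatKernel n v a y) =
      ENNReal.ofReal ((4 * π * u) ^ (-(n : ℝ) / 2) * (4 * π * v) ^ (-(n : ℝ) / 2) *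
        Real.exp (-‖x - y‖ ^ 2 / (4 * (u + v)))) *
      ENNReal.ofReal (Real.exp (-((u + v) / (4 * u * v)) *
        ‖a - ((v / (u + v)) • x + (u / (u + v)) • y)‖ ^ 2)) := by
    intro a
    rw [← ENNReal.ofReal_mul (aux_heat_nonneg n hu _ _), ← ENNReal.ofReal_mul (by positivity)]
    congr 1
    unfold heatKernel
    rw [mul_mul_mul_comm, ← Real.exp_add, aux_square n hu hv, mul_assoc (_ * _),
      ← Real.exp_add, add_comm]
  simp_rw [key]
  rw [lintegral_const_mul' _ _ ENNReal.ofReal_ne_top, aux_gauss n hb,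
    ← ENNReal.ofReal_mul (by positivity)]
  congr 1
  unfold heatKernel
  rw [mul_right_comm]
  congr 1
  rw [neg_div, Real.rpow_neg (by positivity), Real.rpow_neg (by positivity),
    Real.rpow_neg (by positivity), ← Real.inv_rpow (by positivity),
    ← Real.inv_rpow (by positivity), ← Real.inv_rpow (by positivity),
    ← Real.mul_rpow (by positivity) (by positivity),
    ← Real.mul_rpow (by positivity) (by positivity)]
  congr 1
  field_simp

lemma aux_heat_meas (n : ℕ) (u : ℝ) :
    Measurable (fun p : EuclideanSpace ℝ (Fin n) × EuclideanSpace ℝ (Fin n) =>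
      heatKernel n u p.1 p.2) := by
  unfold heatKernel
  fun_prop

/-- The chain kernel. -/
noncomputable def auxChain (n k : ℕ) (u : Fin (k + 1) → ℝ)
    (x y : EuclideanSpace ℝ (Fin n)) (z : Fin k → EuclideanSpace ℝ (Fin n)) : ℝ≥0∞ :=
  ∏ i : Fin (k + 1), ENNReal.ofReal (heatKernel n (u i)
    ((Fin.cons x (Fin.snoc z y) : Fin (k + 2) → EuclideanSpace ℝ (Fin n)) i.castSucc)
    ((Fin.cons x (Fin.snoc z y) : Fin (k + 2) → EuclideanSpace ℝ (Fin n)) i.succ))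

lemma aux_meas_coord (n k : ℕ) {α : Type*} [MeasurableSpace α]
    (f g : α → EuclideanSpace ℝ (Fin n)) (h : α → Fin k → EuclideanSpace ℝ (Fin n))
    (hf : Measurable f) (hg : Measurable g) (hh : ∀ j, Measurable fun a => h a j)
    (i : Fin (k + 2)) :
    Measurable (fun p : α =>
      (Fin.cons (f p) (Fin.snoc (h p) (g p)) : Fin (k + 2) → EuclideanSpace ℝ (Fin n)) i) := by
  refine Fin.cases ?_ (fun i => ?_) i
  · simpa using hf
  · simp only [Fin.cons_succ]
    refine Fin.lastCases ?_ (fun i => ?_) i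
    · simpa only [Fin.snoc_last] using hg
    · simpa only [Fin.snoc_castSucc] using hh i

lemma auxChain_meas (n k : ℕ) (u : Fin (k + 1) → ℝ) {α : Type*} [MeasurableSpace α]
    (f g : α → EuclideanSpace ℝ (Fin n)) (h : α → Fin k → EuclideanSpace ℝ (Fin n))
    (hf : Measurable f) (hg : Measurable g) (hh : ∀ j, Measurable fun a => h a j) :
    Measurable (fun p : α => auxChain n k u (f p) (g p) (h p)) := by
  unfold auxChain
  refine Finset.measurable_prod _ fun i _ => ?_
  exact ((aux_heat_meas n (u i)).comp
    ((aux_meas_coord n k f g h hf hg hh i.castSucc).prodMk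
      (aux_meas_coord n k f g h hf hg hh i.succ))).ennreal_ofReal

lemma auxChain_meas' (n k : ℕ) (u : Fin (k + 1) → ℝ) :
    Measurable (fun p : EuclideanSpace ℝ (Fin n) ×
      (Fin k → EuclideanSpace ℝ (Fin n)) => auxChain n k u p.1 p.1 p.2) :=
  auxChain_meas n k u Prod.fst Prod.fst Prod.snd measurable_fst measurable_fst
    (fun j => (measurable_pi_apply j).comp measurable_snd)

lemma auxChain_meas'' (n k : ℕ) (u : Fin (k + 1) → ℝ) (y : EuclideanSpace ℝ (Fin n)) :
    Measurable (fun p : EuclideanSpace ℝ (Fin n) ×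
      (Fin k → EuclideanSpace ℝ (Fin n)) => auxChain n k u p.1 y p.2) :=
  auxChain_meas n k u Prod.fst (fun _ => y) Prod.snd measurable_fst measurable_const
    (fun j => (measurable_pi_apply j).comp measurable_snd)

lemma auxChain_cons (n k : ℕ) (u : Fin (k + 2) → ℝ)
    (x y a : EuclideanSpace ℝ (Fin n)) (z : Fin k → EuclideanSpace ℝ (Fin n)) :
    auxChain n (k + 1) u x y (Fin.cons a z) =
      ENNReal.ofReal (heatKernel n (u 0) x a) * auxChain n k (fun i => u i.succ) a y z := by
  unfold auxChain
  rw [Fin.prod_univ_succ, ← Fin.cons_snoc_eq_snoc_cons]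
  congr 1

lemma auxChain_lintegral (n k : ℕ) (u : Fin (k + 1) → ℝ) (hu : ∀ i, 0 < u i)
    (x y : EuclideanSpace ℝ (Fin n)) :
    ∫⁻ z, auxChain n k u x y z = ENNReal.ofReal (heatKernel n (∑ i, u i) x y) := by
  induction k generalizing x with
  | zero =>
    rw [lintegral_unique]
    simp [auxChain, Fin.snoc, volume_pi]
  | succ k ih =>
    rw [← (volume_preserving_piFinSuccAbove
      (fun _ : Fin (k + 1) => EuclideanSpace ℝ (Fin n)) 0).symm.lintegral_comp_emb
      (MeasurableEquiv.measurableEmbedding _), Measure.volume_eq_prod]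
    have e : ∀ p : EuclideanSpace ℝ (Fin n) × (Fin k → EuclideanSpace ℝ (Fin n)),
        auxChain n (k + 1) u x y ((MeasurableEquiv.piFinSuccAbove
          (fun _ : Fin (k + 1) => EuclideanSpace ℝ (Fin n)) 0).symm p) =
        ENNReal.ofReal (heatKernel n (u 0) x p.1) *
          auxChain n k (fun i => u i.succ) p.1 y p.2 := by
      intro p
      rw [← auxChain_cons]
      congr 1
      simp [MeasurableEquiv.piFinSuccAbove, Fin.insertNthEquiv, Fin.insertNth_zero']
    have hm : Measurable fun p : EuclideanSpace ℝ (Fin n) × (Fin k → EuclideanSpace ℝ (Fin n)) =>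
        auxChain n k (fun i => u i.succ) p.1 y p.2 :=
      auxChain_meas'' n k _ y
    have hm2 : Measurable fun p : EuclideanSpace ℝ (Fin n) × (Fin k → EuclideanSpace ℝ (Fin n)) =>
        ENNReal.ofReal (heatKernel n (u 0) x p.1) :=
      ((aux_heat_meas n (u 0)).comp (by fun_prop :
        Measurable fun p : EuclideanSpace ℝ (Fin n) × (Fin k → EuclideanSpace ℝ (Fin n)) =>
          (x, p.1))).ennreal_ofReal
    refine (lintegral_congr e).trans ?_
    rw [lintegral_prod _ (by fun_prop)]
    simp_rw [lintegral_const_mul' _ _ ENNReal.ofReal_ne_top]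
    simp_rw [ih (fun i => u i.succ) (fun i => hu _)]
    rw [aux_CK n (hu 0) (Finset.sum_pos (fun i _ => hu _) Finset.univ_nonempty),
      Fin.sum_univ_succ u]

lemma auxChain_translate (n k : ℕ) (u : Fin (k + 1) → ℝ)
    (x : EuclideanSpace ℝ (Fin n)) (z : Fin k → EuclideanSpace ℝ (Fin n)) :
    auxChain n k u x x (z + fun _ => x) = auxChain n k u 0 0 z := by
  have h : ∀ i, (Fin.cons x (Fin.snoc (z + fun _ => x) x) :
      Fin (k + 2) → EuclideanSpace ℝ (Fin n)) i =
      (Fin.cons 0 (Fin.snoc z 0) : Fin (k + 2) → EuclideanSpace ℝ (Fin n)) i + x := by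
    intro i
    refine Fin.cases ?_ (fun i => ?_) i
    · simp
    · simp only [Fin.cons_succ]
      refine Fin.lastCases ?_ (fun i => ?_) i
      · simp
      · simp
  unfold auxChain heatKernel
  simp_rw [h, add_sub_add_right_eq_sub]

lemma auxChain_marginal (n k : ℕ) (u : Fin (k + 1) → ℝ) (hu : ∀ i, 0 < u i) (j : Fin k)
    (f : EuclideanSpace ℝ (Fin n) → ℝ≥0∞) (hf : Measurable f) :
    ∫⁻ p : EuclideanSpace ℝ (Fin n) × (Fin k → EuclideanSpace ℝ (Fin n)),
      auxChain n k u p.1 p.1 p.2 * f (p.2 j) =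
      ENNReal.ofReal ((4 * π * ∑ i, u i) ^ (-(n : ℝ) / 2)) * ∫⁻ x, f x := by
  have hm : Measurable fun p : EuclideanSpace ℝ (Fin n) × (Fin k → EuclideanSpace ℝ (Fin n)) =>
      auxChain n k u p.1 p.1 p.2 := auxChain_meas' n k u
  have hm0 : Measurable fun z : (Fin k → EuclideanSpace ℝ (Fin n)) =>
      auxChain n k u 0 0 z := auxChain_meas n k u _ _ _ measurable_const measurable_const measurable_pi_apply
  rw [Measure.volume_eq_prod, lintegral_prod _ (by fun_prop)]
  have e : ∀ x : EuclideanSpace ℝ (Fin n),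
      ∫⁻ z, auxChain n k u x x z * f (z j) = ∫⁻ z, auxChain n k u 0 0 z * f (z j + x) := by
    intro x
    rw [← lintegral_add_right_eq_self
      (fun z : Fin k → EuclideanSpace ℝ (Fin n) => auxChain n k u x x z * f (z j)) (fun _ => x)]
    simp_rw [auxChain_translate]
    rfl
  simp_rw [e]
  rw [lintegral_lintegral_swap (by fun_prop)]
  have e2 : ∀ z : Fin k → EuclideanSpace ℝ (Fin n),
      ∫⁻ x, auxChain n k u 0 0 z * f (z j + x) = auxChain n k u 0 0 z * ∫⁻ x, f x := by
    intro z
    rw [lintegral_const_mul _ (by fun_prop), lintegral_add_left_eq_self f]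
  simp_rw [e2]
  rw [lintegral_mul_const _ hm0, auxChain_lintegral n k u hu]
  simp [heatKernel]

lemma aux_simplex (k : ℕ) (t : ℝ) (ht : 0 < t) :
    volume {s : Fin k → ℝ | StrictMono s ∧ ∀ i, 0 < s i ∧ s i < t} ≤
      ENNReal.ofReal (t ^ k / k.factorial) := by
  set S : Set (Fin k → ℝ) := {s | StrictMono s ∧ ∀ i, 0 < s i ∧ s i < t} with hS
  have hSm : MeasurableSet S := by
    have : S = (⋂ i : Fin k, ⋂ j : Fin k, {s | i < j → s i < s j}) ∩
        ⋂ i : Fin k, {s | 0 < s i ∧ s i < t} := by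
      ext s; simp [hS, StrictMono]
    rw [this]
    refine MeasurableSet.inter (.iInter fun i => .iInter fun j => ?_) (.iInter fun i => ?_)
    · by_cases h : i < j
      · simpa [h] using measurableSet_lt (measurable_pi_apply i) (measurable_pi_apply j)
      · simp [h]
    · exact (measurableSet_lt measurable_const (measurable_pi_apply i)).inter
        (measurableSet_lt (measurable_pi_apply i) measurable_const)
  have hperm : ∀ σ : Equiv.Perm (Fin k), MeasurePreserving
      (fun s : Fin k → ℝ => fun i => s (σ i)) volume volume := by
    intro σ
    have := volume_measurePreserving_piCongrLeft (fun _ : Fin k => ℝ) σ.symm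
    have heq : (fun s : Fin k → ℝ => fun i => s (σ i)) =
        MeasurableEquiv.piCongrLeft (fun _ : Fin k => ℝ) σ.symm := by
      funext s i
      have h := Equiv.piCongrLeft_apply_apply (fun _ : Fin k => ℝ) σ.symm s (σ i)
      simp only [Equiv.symm_apply_apply] at h
      exact h.symm
    rw [heq]; exact this
  let A : Equiv.Perm (Fin k) → Set (Fin k → ℝ) := fun σ => (fun s i => s (σ i)) ⁻¹' S
  have hA : ∀ σ, volume (A σ) = volume S := fun σ =>
    (hperm σ).measure_preimage hSm.nullMeasurableSet
  have hAm : ∀ σ, MeasurableSet (A σ) := fun σ => (hperm σ).measurable hSm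
  have hdis : Pairwise (Function.onFun Disjoint A) := by
    intro σ τ hne
    refine Set.disjoint_left.2 fun s h1 h2 => hne ?_
    have m1 : StrictMono (fun i => s (σ i)) := h1.1
    have m2 : StrictMono (fun i => s (τ i)) := h2.1
    have hr : (fun i => s (σ i)) = (fun i => s (τ i)) := by
      refine (StrictMono.range_inj m1 m2).1 ?_
      have r : ∀ ρ : Equiv.Perm (Fin k), Set.range (fun i => s (ρ i)) = Set.range s :=
        fun ρ => ρ.surjective.range_comp s
      rw [r, r]
    have hinj : Function.Injective s := by
      intro a b hab
      have := @StrictMono.injective _ _ _ _ _ m1 (σ.symm a) (σ.symm b) (by simpa using hab)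
      exact σ.symm.injective this
    ext i
    exact congrArg _ (hinj (congrFun hr i))
  have hsum := measure_iUnion (μ := volume) hdis hAm
  have hle : volume (⋃ σ, A σ) ≤ ENNReal.ofReal (t ^ k) := by
    have : (⋃ σ, A σ) ⊆ Set.pi Set.univ (fun _ : Fin k => Set.Ioo 0 t) := by
      refine Set.iUnion_subset fun σ s hs i _ => ?_
      have := hs.2 (σ.symm i)
      simpa using this
    refine (measure_mono this).trans ?_
    rw [volume_pi_pi]
    simp [ENNReal.ofReal_pow ht.le]
  rw [hsum, tsum_fintype] at hle
  simp only [hA, Finset.sum_const, Finset.card_univ, Fintype.card_perm, Fintype.card_fin,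
    nsmul_eq_mul] at hle
  rw [ENNReal.ofReal_div_of_pos (by positivity), ENNReal.ofReal_natCast,
    ENNReal.le_div_iff_mul_le (by simp [Nat.factorial_ne_zero]) (by simp), mul_comm]
  exact hle

lemma aux_fixed (n k : ℕ) (hk : 1 ≤ k) (u : Fin (k + 1) → ℝ) (hu : ∀ i, 0 < u i)
    (g : Fin k → EuclideanSpace ℝ (Fin n) → ℝ≥0∞) (hg : ∀ j, Measurable (g j)) :
    ∫⁻ p : EuclideanSpace ℝ (Fin n) × (Fin k → EuclideanSpace ℝ (Fin n)),
      auxChain n k u p.1 p.1 p.2 * ∏ j, g j (p.2 j) ≤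
      ENNReal.ofReal ((4 * π * ∑ i, u i) ^ (-(n : ℝ) / 2)) *
        ∏ j, (∫⁻ x, g j x ^ k) ^ ((1 : ℝ) / k) := by
  have hk0 : (k : ℝ) ≠ 0 := by positivity
  have hpow : ∀ c : ℝ≥0∞, ∏ _j : Fin k, c ^ ((1 : ℝ) / k) = c := by
    intro c
    rw [Finset.prod_const, Finset.card_univ, Fintype.card_fin, ← ENNReal.rpow_natCast,
      ← ENNReal.rpow_mul, one_div_mul_cancel hk0, ENNReal.rpow_one]
  have hm : Measurable fun p : EuclideanSpace ℝ (Fin n) × (Fin k → EuclideanSpace ℝ (Fin n)) =>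
      auxChain n k u p.1 p.1 p.2 := auxChain_meas' n k u
  have h := ENNReal.lintegral_prod_norm_pow_le
    (μ := (volume : Measure (EuclideanSpace ℝ (Fin n) × (Fin k → EuclideanSpace ℝ (Fin n)))))
    (Finset.univ : Finset (Fin k))
    (f := fun j p => auxChain n k u p.1 p.1 p.2 * g j (p.2 j) ^ k)
    (fun j _ => by fun_prop) (p := fun _ => (1 : ℝ) / k)
    (by simp [hk0]) (fun _ _ => by positivity)
  calc _ = _ := by
        refine lintegral_congr fun p => ?_
        simp_rw [ENNReal.mul_rpow_of_nonneg _ _ (show (0 : ℝ) ≤ 1 / k by positivity)]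
        rw [Finset.prod_mul_distrib, hpow]
        congr 1
        refine Finset.prod_congr rfl fun j _ => ?_
        rw [← ENNReal.rpow_natCast, ← ENNReal.rpow_mul, mul_one_div_cancel hk0, ENNReal.rpow_one]
    _ ≤ _ := h
    _ = _ := by
        simp_rw [fun j => auxChain_marginal n k u hu j (fun x => g j x ^ k) (by fun_prop),
          ENNReal.mul_rpow_of_nonneg _ _ (show (0 : ℝ) ≤ 1 / k by positivity)]
        rw [Finset.prod_mul_distrib, hpow]

lemma aux_lint (n k : ℕ) (hk : 1 ≤ k) (f : EuclideanSpace ℝ (Fin n) → ℝ) (hf : Measurable f)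
    (hb : ∃ B : ℝ, ∀ x, |f x| ≤ B) (hs : HasCompactSupport f) :
    ∫⁻ x, ‖f x‖ₑ ^ k = ENNReal.ofReal (∫ x, |f x| ^ k) := by
  obtain ⟨B, hB⟩ := hb
  have hi : Integrable (fun x => |f x| ^ k) := by
    have hsub : Function.support (fun x => |f x| ^ k) ⊆ tsupport f := by
      intro x hx
      refine subset_tsupport f ?_
      intro h0
      apply hx
      simp [h0, Nat.one_le_iff_ne_zero.1 hk]
    rw [← integrableOn_iff_integrable_of_support_subset hsub]
    refine Measure.integrableOn_of_bounded (M := B ^ k) hs.measure_lt_top.ne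
      (by fun_prop) (Eventually.of_forall fun x => ?_)
    rw [Real.norm_eq_abs, abs_pow, abs_abs]
    exact pow_le_pow_left₀ (abs_nonneg _) (hB x) k
  rw [ofReal_integral_eq_lintegral_ofReal hi (Eventually.of_forall fun x => by positivity)]
  refine lintegral_congr fun x => ?_
  rw [ENNReal.ofReal_pow (abs_nonneg _), Real.enorm_eq_ofReal_abs]

lemma aux_incr_pos (k : ℕ) (t : ℝ) (ht : 0 < t) (s : Fin k → ℝ) (hs : StrictMono s)
    (hs2 : ∀ i, 0 < s i ∧ s i < t) (i : Fin (k + 1)) :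
    0 < (Fin.cons 0 (Fin.snoc s t) : Fin (k + 2) → ℝ) i.succ -
                (Fin.cons 0 (Fin.snoc s t) : Fin (k + 2) → ℝ) i.castSucc := by
  have h : StrictMono (Fin.cons 0 (Fin.snoc s t) : Fin (k + 2) → ℝ) := by
    intro a b
    refine Fin.cases ?_ (fun a => ?_) a <;> refine Fin.cases ?_ (fun b => ?_) b
    · simp
    · intro _
      refine Fin.lastCases ?_ (fun b => ?_) b
      · simpa using ht
      · simpa using (hs2 b).1
    · simp
    · simp only [Fin.succ_lt_succ_iff, Fin.cons_succ]
      refine Fin.lastCases ?_ (fun a => ?_) a <;> refine Fin.lastCases ?_ (fun b => ?_) b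
      · simp
      · intro h
        exact absurd h (not_lt.2 (Fin.le_last _))
      · intro _; simpa using (hs2 a).2
      · intro h
        simpa using hs (by simpa using h)
  exact sub_pos.2 (h i.castSucc_lt_succ)

/-- `|T_k(t; V₁,…,V_k)| ≤ (4πt)^{-n/2} (tᵏ/k!) ∏_j ‖V_j‖_{L^k}`. -/
theorem statement12 (n k : ℕ) (hn : 1 ≤ n) (hk : 1 ≤ k) (t : ℝ) (ht : 0 < t)
    (V : Fin k → (EuclideanSpace ℝ (Fin n) → ℝ))
    (hVmeas : ∀ j, Measurable (V j)) (hVbd : ∀ j, ∃ B : ℝ, ∀ x, |V j x| ≤ B)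
    (hVsupp : ∀ j, HasCompactSupport (V j)) :
    |traceTermMulti n k V t| ≤
      (4 * Real.pi * t) ^ (-(n : ℝ) / 2) * (t ^ k / (Nat.factorial k)) *
        ∏ j : Fin k,
          (∫ x : EuclideanSpace ℝ (Fin n), |V j x| ^ k) ^ ((1 : ℝ) / k) := by
  have hmain : ∀ s ∈ {s : Fin k → ℝ | StrictMono s ∧ ∀ i, 0 < s i ∧ s i < t},
      ‖∫ x : EuclideanSpace ℝ (Fin n),
      ∫ y : Fin k → EuclideanSpace ℝ (Fin n),
        (∏ i : Fin (k + 1),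
            heatKernel n
              ((Fin.cons 0 (Fin.snoc s t) : Fin (k + 2) → ℝ) i.succ -
                (Fin.cons 0 (Fin.snoc s t) : Fin (k + 2) → ℝ) i.castSucc)
              ((Fin.cons x (Fin.snoc y x) : Fin (k + 2) → EuclideanSpace ℝ (Fin n)) i.castSucc)
              ((Fin.cons x (Fin.snoc y x) : Fin (k + 2) → EuclideanSpace ℝ (Fin n)) i.succ)) *
          ∏ i : Fin k, V i (y i)‖ ≤ (4 * Real.pi * t) ^ (-(n : ℝ) / 2) * ∏ j : Fin k,
          (∫ x : EuclideanSpace ℝ (Fin n), |V j x| ^ k) ^ ((1 : ℝ) / k) := by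
    rintro s ⟨hs, hs2⟩
    have hu := aux_incr_pos k t ht s hs hs2
    set u : Fin (k + 1) → ℝ := fun i => (Fin.cons 0 (Fin.snoc s t) : Fin (k + 2) → ℝ) i.succ -
                (Fin.cons 0 (Fin.snoc s t) : Fin (k + 2) → ℝ) i.castSucc with hudef
    have husum : ∑ i, u i = t := by
      rw [hudef, Finset.sum_sub_distrib]
      have h1 := Fin.sum_univ_succ (Fin.cons 0 (Fin.snoc s t) : Fin (k + 2) → ℝ)
      have h2 := Fin.sum_univ_castSucc (Fin.cons 0 (Fin.snoc s t) : Fin (k + 2) → ℝ)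
      have h3 : (Fin.cons 0 (Fin.snoc s t) : Fin (k + 2) → ℝ) (Fin.last (k + 1)) = t := by
        rw [← Fin.succ_last, Fin.cons_succ, Fin.snoc_last]
      rw [h3] at h2
      rw [Fin.cons_zero] at h1
      linarith
    have hfix := aux_fixed n k hk u hu (fun j x => ‖V j x‖ₑ) (fun j => (hVmeas j).enorm)
    have hI : ∀ j, 0 ≤ ∫ x : EuclideanSpace ℝ (Fin n), |V j x| ^ k := fun j =>
      integral_nonneg fun x => by positivity
    rw [husum] at hfix
    simp_rw [fun j => aux_lint n k hk (V j) (hVmeas j) (hVbd j) (hVsupp j),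
      fun j => ENNReal.ofReal_rpow_of_nonneg (hI j) (show (0 : ℝ) ≤ 1 / k by positivity)] at hfix
    rw [← ENNReal.ofReal_prod_of_nonneg (fun j _ => Real.rpow_nonneg (hI j) _),
      ← ENNReal.ofReal_mul (by positivity)] at hfix
    have hnn : 0 ≤ (4 * Real.pi * t) ^ (-(n : ℝ) / 2) * ∏ j : Fin k,
          (∫ x : EuclideanSpace ℝ (Fin n), |V j x| ^ k) ^ ((1 : ℝ) / k) :=
      mul_nonneg (by positivity) (Finset.prod_nonneg fun j _ => Real.rpow_nonneg (hI j) _)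
    rw [← ENNReal.ofReal_le_ofReal_iff hnn, ofReal_norm]
    refine le_trans ?_ hfix
    have hm := auxChain_meas' n k u
    have hV' : ∀ j : Fin k, Measurable
        (fun p : EuclideanSpace ℝ (Fin n) × (Fin k → EuclideanSpace ℝ (Fin n)) =>
          ‖V j (p.2 j)‖ₑ) := fun j =>
      ((hVmeas j).comp ((measurable_pi_apply j).comp measurable_snd)).enorm
    rw [Measure.volume_eq_prod, lintegral_prod _ (by fun_prop)]
    refine (enorm_integral_le_lintegral_enorm _).trans (lintegral_mono fun x => ?_)
    refine (enorm_integral_le_lintegral_enorm _).trans (lintegral_mono fun y => ?_)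
    rw [enorm_mul]
    refine le_of_eq ?_
    have hprod : ∀ (m : ℕ) (f : Fin m → ℝ), ‖∏ i, f i‖ₑ = ∏ i, ‖f i‖ₑ := by
      intro m f
      simp_rw [Real.enorm_eq_ofReal_abs, Finset.abs_prod]
      rw [ENNReal.ofReal_prod_of_nonneg fun i _ => abs_nonneg _]
    rw [hprod, hprod]
    congr 1
    refine Finset.prod_congr rfl fun i _ => ?_
    rw [Real.enorm_eq_ofReal (aux_heat_nonneg n (hu i) _ _)]
  have hvol := aux_simplex k t ht
  have h := norm_setIntegral_le_of_norm_le_const (hvol.trans_lt ENNReal.ofReal_lt_top) hmain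
  rw [Real.norm_eq_abs] at h
  unfold traceTermMulti
  refine h.trans ?_
  rw [mul_right_comm _ (t ^ k / _)]
  refine mul_le_mul_of_nonneg_left ?_ ?_
  · exact ENNReal.toReal_le_of_le_ofReal (by positivity) hvol
  · exact mul_nonneg (by positivity) (Finset.prod_nonneg fun j _ =>
      Real.rpow_nonneg (integral_nonneg fun x => by positivity) _)
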